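/- arXiv:math/0603035 — 2 statements merged into one kernel-verified Lean document; each statement's English description precedes it below -/
import Mathlib

section
/- Let m, n ≥ 1. (a) If (H_ε)_{ε∈(0,1]} belongs to N_τ(ℝ^{m+n}) and (f_ε)_{ε∈(0,1]} belongs to E_S(ℝ^n), then the net (x ↦ ∫_{ℝ^n} H_ε(x,y) f_ε(y) dy)_{ε∈(0,1]} belongs to N_τ(ℝ^m). (b) If (H_ε)_{ε∈(0,1]} belongs to E_τ(ℝ^{m+n}) and (f_ε)_{ε∈(0,1]} belongs to N_S(ℝ^n), then the net (x ↦ ∫_{ℝ^n} H_ε(x,y) f_ε(y) dy)_{ε∈(0,1]} belongs to N_τ(ℝ^m). Consequently the class of this net in the quotient E_τ(ℝ^m)/N_τ(ℝ^m) depends only on the classes of (H_ε) and (f_ε) and not on the chosen representatives. -/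
open MeasureTheory Filter

noncomputable def mu {E : Type*} [NormedAddCommGroup E] [NormedSpace ℝ E]
    (r : ℤ) (l : ℕ) (f : E → ℂ) : ENNReal :=
  ⨆ (x : E) (i : ℕ) (_ : i ≤ l),
    ENNReal.ofReal ((1 + ‖x‖) ^ r * ‖iteratedFDeriv ℝ i f x‖)

def IsOEps (g : ℝ → ENNReal) (h : ℝ → ℝ) : Prop :=
  ∃ C > (0:ℝ), ∃ η > (0:ℝ), ∀ ε : ℝ, 0 < ε → ε ≤ η → g ε ≤ ENNReal.ofReal (C * h ε)

def SchwartzLike {E : Type*} [NormedAddCommGroup E] [NormedSpace ℝ E] (f : E → ℂ) : Prop :=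
  ContDiff ℝ (⊤ : ℕ∞) f ∧ ∀ q l : ℕ, mu (q : ℤ) l f < ⊤

def TemperateGrowth' {E : Type*} [NormedAddCommGroup E] [NormedSpace ℝ E] (f : E → ℂ) : Prop :=
  ContDiff ℝ (⊤ : ℕ∞) f ∧ ∀ l : ℕ, ∃ q : ℕ, mu (-(q:ℤ)) l f < ⊤

def IsESNet {E : Type*} [NormedAddCommGroup E] [NormedSpace ℝ E] (f : ℝ → E → ℂ) : Prop :=
  (∀ ε ∈ Set.Ioc (0:ℝ) 1, SchwartzLike (f ε)) ∧
  ∀ q l : ℕ, ∃ N : ℕ, IsOEps (fun ε => mu (q:ℤ) l (f ε)) (fun ε => ε ^ (-(N:ℤ)))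

def IsNSNet {E : Type*} [NormedAddCommGroup E] [NormedSpace ℝ E] (f : ℝ → E → ℂ) : Prop :=
  (∀ ε ∈ Set.Ioc (0:ℝ) 1, SchwartzLike (f ε)) ∧
  ∀ q l p : ℕ, IsOEps (fun ε => mu (q:ℤ) l (f ε)) (fun ε => ε ^ p)

def IsEtauNet {E : Type*} [NormedAddCommGroup E] [NormedSpace ℝ E] (f : ℝ → E → ℂ) : Prop :=
  (∀ ε ∈ Set.Ioc (0:ℝ) 1, TemperateGrowth' (f ε)) ∧
  ∀ l : ℕ, ∃ q N : ℕ, IsOEps (fun ε => mu (-(q:ℤ)) l (f ε)) (fun ε => ε ^ (-(N:ℤ)))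

def IsNtauNet {E : Type*} [NormedAddCommGroup E] [NormedSpace ℝ E] (f : ℝ → E → ℂ) : Prop :=
  (∀ ε ∈ Set.Ioc (0:ℝ) 1, TemperateGrowth' (f ε)) ∧
  ∀ l : ℕ, ∃ q : ℕ, ∀ p : ℕ, IsOEps (fun ε => mu (-(q:ℤ)) l (f ε)) (fun ε => ε ^ p)

noncomputable def scaled {d : ℕ} (ρ : (Fin d → ℝ) → ℂ) (t : ℝ) (x : Fin d → ℝ) : ℂ :=
  ((t ^ (-(d:ℤ)) : ℝ) : ℂ) * ρ (t⁻¹ • x)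

def IsMollifier {d : ℕ} (ρ : SchwartzMap (Fin d → ℝ) ℂ) : Prop :=
  (∫ x : Fin d → ℝ, ρ x) = 1 ∧
  ∀ α : Fin d → ℕ, α ≠ 0 → (∫ x : Fin d → ℝ, (∏ j, (x j : ℂ) ^ (α j)) * ρ x) = 0

def MemLa (a : ℝ) (N : ℕ → ℝ) : Prop :=
  (∀ l, 0 ≤ N l) ∧
  ((a = 0 ∧ Filter.Tendsto (fun l : ℕ => N l / (l:ℝ)) Filter.atTop (nhds 0)) ∨
   (0 < a ∧ Filter.limsup (fun l : ℕ => N l / (l:ℝ)) Filter.atTop < a))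

def IsESLNet {E : Type*} [NormedAddCommGroup E] [NormedSpace ℝ E]
    (a : ℝ) (f : ℝ → E → ℂ) : Prop :=
  (∀ ε ∈ Set.Ioc (0:ℝ) 1, SchwartzLike (f ε)) ∧
  ∃ N : ℕ → ℝ, MemLa a N ∧
    ∀ q l : ℕ, IsOEps (fun ε => mu (q:ℤ) l (f ε)) (fun ε => ε ^ (-(N l)))

def IsEtauLNet {E : Type*} [NormedAddCommGroup E] [NormedSpace ℝ E]
    (c : ℝ) (f : ℝ → E → ℂ) : Prop :=
  (∀ ε ∈ Set.Ioc (0:ℝ) 1, TemperateGrowth' (f ε)) ∧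
  ∃ N : ℕ → ℝ, MemLa c N ∧ ∃ q : ℕ, ∀ l : ℕ,
    IsOEps (fun ε => mu (-(q:ℤ)) l (f ε)) (fun ε => ε ^ (-(N l)))

def IsESinfNet {E : Type*} [NormedAddCommGroup E] [NormedSpace ℝ E] (f : ℝ → E → ℂ) : Prop :=
  (∀ ε ∈ Set.Ioc (0:ℝ) 1, SchwartzLike (f ε)) ∧
  ∃ N : ℕ, ∀ q l : ℕ, IsOEps (fun ε => mu (q:ℤ) l (f ε)) (fun ε => ε ^ (-(N:ℤ)))

def ModerateNetMaps (m n : ℕ)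
    (L : ℝ → SchwartzMap (Fin n → ℝ) ℂ → ((Fin m → ℝ) → ℂ)) : Prop :=
  (∀ ε ∈ Set.Ioc (0:ℝ) 1, ∀ f, TemperateGrowth' (L ε f)) ∧
  ∀ l : ℕ, ∃ C : ℝ → ℝ, (∀ ε, 0 ≤ C ε) ∧
    (∃ N : ℕ, ∃ C₀ > (0:ℝ), ∃ η > (0:ℝ), ∀ ε : ℝ, 0 < ε → ε ≤ η → C ε ≤ C₀ * ε ^ (-(N:ℤ))) ∧
    ∃ p q l' : ℕ, ∃ η > (0:ℝ), ∀ ε : ℝ, 0 < ε → ε ≤ η →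
      ∀ f : SchwartzMap (Fin n → ℝ) ℂ,
        mu (-(p:ℤ)) l (L ε f) ≤ ENNReal.ofReal (C ε) * mu (q:ℤ) l' ⇑f

def NegligibleNetMaps (m n : ℕ)
    (L : ℝ → SchwartzMap (Fin n → ℝ) ℂ → ((Fin m → ℝ) → ℂ)) : Prop :=
  (∀ ε ∈ Set.Ioc (0:ℝ) 1, ∀ f, TemperateGrowth' (L ε f)) ∧
  ∀ l : ℕ, ∃ C : ℝ → ℝ, (∀ ε, 0 ≤ C ε) ∧
    (∀ p' : ℕ, ∃ C₀ > (0:ℝ), ∃ η > (0:ℝ), ∀ ε : ℝ, 0 < ε → ε ≤ η → C ε ≤ C₀ * ε ^ p') ∧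
    ∃ p q l' : ℕ, ∃ η > (0:ℝ), ∀ ε : ℝ, 0 < ε → ε ≤ η →
      ∀ f : SchwartzMap (Fin n → ℝ) ℂ,
        mu (-(p:ℤ)) l (L ε f) ≤ ENNReal.ofReal (C ε) * mu (q:ℤ) l' ⇑f

def StronglyModerateWith (m n : ℕ)
    (L : ℝ → SchwartzMap (Fin n → ℝ) ℂ → ((Fin m → ℝ) → ℂ))
    (lam : ℕ → ℕ) (r : ℕ → ℝ) : Prop :=
  (∀ ε ∈ Set.Ioc (0:ℝ) 1, ∀ f, TemperateGrowth' (L ε f)) ∧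
  (∀ l, 0 ≤ r l) ∧
  ∀ l : ℕ, ∃ C ≥ (0:ℝ), ∃ p q : ℕ, ∃ η > (0:ℝ), ∀ ε : ℝ, 0 < ε → ε ≤ η →
    ∀ f : SchwartzMap (Fin n → ℝ) ℂ,
      mu (-(p:ℤ)) l (L ε f) ≤ ENNReal.ofReal (C * ε ^ (-(r l))) * mu (q:ℤ) (lam l) ⇑f

def ContinuousIntoOM (m n : ℕ) (L : SchwartzMap (Fin n → ℝ) ℂ → ((Fin m → ℝ) → ℂ)) : Prop :=
  ∀ l : ℕ, ∃ C ≥ (0:ℝ), ∃ p q l' : ℕ, ∀ f,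
    mu (-(p:ℤ)) l (L f) ≤ ENNReal.ofReal C * mu (q:ℤ) l' ⇑f

noncomputable def muOn {d : ℕ} (Ω : Set (Fin d → ℝ)) (r : ℤ) (l : ℕ)
    (f : (Fin d → ℝ) → ℂ) : ENNReal :=
  ⨆ (x : Ω) (i : ℕ) (_ : i ≤ l),
    ENNReal.ofReal ((1 + ‖(x : Fin d → ℝ)‖) ^ r * ‖iteratedFDerivWithin ℝ i f Ω (x : Fin d → ℝ)‖)

def IsBox {d : ℕ} (Ω : Set (Fin d → ℝ)) : Prop :=
  ∃ I : Fin d → Set ℝ, (∀ j, IsOpen (I j) ∧ Convex ℝ (I j)) ∧ Ω = Set.univ.pi I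

def IsRegularSet (R : Set (ℕ → ℝ)) : Prop :=
  R.Nonempty ∧ (∀ N ∈ R, ∀ n, 0 ≤ N n) ∧
  (∀ N ∈ R, ∀ k : ℕ, ∃ N' ∈ R, ∀ n, N n + k ≤ N' n) ∧
  (∀ N₁ ∈ R, ∀ N₂ ∈ R, ∃ N ∈ R, ∀ n, max (N₁ n) (N₂ n) ≤ N n) ∧
  (∀ N₁ ∈ R, ∀ N₂ ∈ R, ∃ N ∈ R, ∀ l₁ l₂ : ℕ, N₁ l₁ + N₂ l₂ ≤ N (l₁ + l₂))

def IsESRNet {E : Type*} [NormedAddCommGroup E] [NormedSpace ℝ E]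
    (R : Set (ℕ → ℝ)) (f : ℝ → E → ℂ) : Prop :=
  (∀ ε ∈ Set.Ioc (0:ℝ) 1, SchwartzLike (f ε)) ∧
  ∃ N ∈ R, ∀ q l : ℕ, IsOEps (fun ε => mu (q:ℤ) l (f ε)) (fun ε => ε ^ (-(N l)))

def IsEtauRNet {E : Type*} [NormedAddCommGroup E] [NormedSpace ℝ E]
    (R : Set (ℕ → ℝ)) (f : ℝ → E → ℂ) : Prop :=
  (∀ ε ∈ Set.Ioc (0:ℝ) 1, TemperateGrowth' (f ε)) ∧
  ∃ N ∈ R, ∃ q : ℕ, ∀ l : ℕ,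
    IsOEps (fun ε => mu (-(q:ℤ)) l (f ε)) (fun ε => ε ^ (-(N l)))

noncomputable def pderiv' {d : ℕ} (j : Fin d) (f : (Fin d → ℝ) → ℂ) : (Fin d → ℝ) → ℂ :=
  fun x => fderiv ℝ f x (Pi.single j 1)

noncomputable def multiDeriv {d : ℕ} : List (Fin d) → ((Fin d → ℝ) → ℂ) → ((Fin d → ℝ) → ℂ)
  | [], f => f
  | j :: js, f => pderiv' j (multiDeriv js f)

/-!
Differentiating under the integral sign puts all `x`-derivatives on `H`. Since
`1 + ‖(x, y)‖ ≤ (1 + ‖x‖) * (1 + ‖y‖)`, growth of order `q` of these derivatives costs a factor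
`(1 + ‖x‖) ^ q`, absorbed by the weight of the seminorm, and a factor `(1 + ‖y‖) ^ q`, absorbed by
the decay of `f`. Spending `k` further powers of decay, with `(1 + ‖y‖) ^ (-k)` integrable, gives
`μ_{-q,l}(∫ H f) ≤ C * μ_{-q,l}(H) * μ_{q+k,0}(f)` with `C` independent of `ε`, and a negligible
factor times a moderate one is negligible.
-/

section ParametricIntegral

variable {α E V : Type*} [MeasurableSpace α] {μ : Measure α}
  [NormedAddCommGroup E] [NormedSpace ℝ E] [NormedAddCommGroup V] [NormedSpace ℝ V]

theorem hasFTaylorSeriesUpTo_integral_of_dominated {N : ℕ∞} {F : E → α → V}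
    {P : E → α → FormalMultilinearSeries ℝ E V}
    (hF : ∀ᵐ a ∂μ, HasFTaylorSeriesUpTo N (F · a) (P · a))
    (hP_meas : ∀ k : ℕ, k ≤ N → ∀ x, AEStronglyMeasurable (P x · k) μ)
    (hP_bound : ∀ k : ℕ, k ≤ N → ∀ x₀, ∃ s ∈ nhds x₀, ∃ bound : α → ℝ, Integrable bound μ ∧
      ∀ᵐ a ∂μ, ∀ x ∈ s, ‖P x a k‖ ≤ bound a) :
    HasFTaylorSeriesUpTo N (fun x => ∫ a, F x a ∂μ) (fun x k => ∫ a, P x a k ∂μ) where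
  zero_eq x := by
    let uncurry := (continuousMultilinearCurryFin0 ℝ E V).toContinuousLinearEquiv
    have h_uncurry := uncurry.integral_comp_comm (μ := μ) (P x · 0)
    refine h_uncurry.symm.trans (integral_congr_ae ?_)
    filter_upwards [hF] with a ha using ha.zero_eq x
  fderiv k hk x₀ := by
    have hk_le : (k : ℕ∞) ≤ N := by exact_mod_cast hk.le
    have hk_succ : ((k + 1 : ℕ) : ℕ∞) ≤ N := by
      exact_mod_cast ENat.add_one_natCast_le_withTop_of_lt hk
    let curry := continuousMultilinearCurryLeftEquiv ℝ (fun _ : Fin (k + 1) => E) V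
    have h_curry := ContinuousLinearEquiv.integral_comp_comm (𝕜 := ℝ) (μ := μ)
      (F := E →L[ℝ] E [×k]→L[ℝ] V) curry.toContinuousLinearEquiv (P x₀ · (k + 1))
    obtain ⟨s₀, hs₀, b₀, hb₀, hP₀⟩ := hP_bound k hk_le x₀
    obtain ⟨s₁, hs₁, b₁, hb₁, hP₁⟩ := hP_bound (k + 1) hk_succ x₀
    have h_int : Integrable (P x₀ · k) μ := hb₀.mono' (hP_meas k hk_le x₀) <| by
      filter_upwards [hP₀] with a ha using ha x₀ (mem_of_mem_nhds hs₀)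
    change HasFDerivAt _ (curry (∫ a, P x₀ a (k + 1) ∂μ)) x₀
    refine h_curry ▸ hasFDerivAt_integral_of_dominated_of_fderiv_le
      (F' := fun x a => curry (P x a (k + 1))) hs₁ (.of_forall (hP_meas k hk_le)) h_int
      (curry.continuous.comp_aestronglyMeasurable (hP_meas (k + 1) hk_succ x₀)) ?_ hb₁ ?_
    · simpa only [LinearIsometryEquiv.norm_map] using hP₁
    · filter_upwards [hF] with a ha x _ using ha.fderiv k hk x
  cont k hk := by
    have hk_le : (k : ℕ∞) ≤ N := by exact_mod_cast hk
    refine continuous_iff_continuousAt.2 fun x₀ => ?_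
    obtain ⟨s, hs, bound, h_int, hP⟩ := hP_bound k hk_le x₀
    refine continuousAt_of_dominated (.of_forall (hP_meas k hk_le)) ?_ h_int ?_
    · filter_upwards [hs] with x hx
      filter_upwards [hP] with a ha using ha x hx
    · filter_upwards [hF] with a ha using (ha.cont k hk).continuousAt

end ParametricIntegral

section Kernel

variable {E G V 𝕜 : Type*} [NormedAddCommGroup E] [NormedAddCommGroup G]

lemma one_add_norm_prodMk_le (x : E) (y : G) : 1 + ‖(x, y)‖ ≤ (1 + ‖x‖) * (1 + ‖y‖) := by
  have h_add : ‖(x, y)‖ ≤ ‖x‖ + ‖y‖ := by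
    rw [Prod.norm_def]
    exact max_le_add_of_nonneg (norm_nonneg x) (norm_nonneg y)
  nlinarith [mul_nonneg (norm_nonneg x) (norm_nonneg y)]

variable [NormedSpace ℝ E] [NormedSpace ℝ G] [NormedAddCommGroup V] [NormedSpace ℝ V]

lemma iteratedFDeriv_comp_prodMk_left {n : WithTop ℕ∞} {H : E × G → V} (hH : ContDiff ℝ n H)
    {i : ℕ} (hi : i ≤ n) (x : E) (y : G) :
    iteratedFDeriv ℝ i (fun x => H (x, y)) x =
      (iteratedFDeriv ℝ i H (x, y)).compContinuousLinearMap
        fun _ => ContinuousLinearMap.inl ℝ E G := by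
  have h_translate : ContDiff ℝ n fun z => H (z + (0, y)) := hH.comp (by fun_prop)
  have h_inl := (ContinuousLinearMap.inl ℝ E G).iteratedFDeriv_comp_right h_translate x hi
  simpa [Function.comp_def, iteratedFDeriv_comp_add_right] using h_inl

lemma norm_iteratedFDeriv_comp_prodMk_left_le {n : WithTop ℕ∞} {H : E × G → V}
    (hH : ContDiff ℝ n H) {i : ℕ} (hi : i ≤ n) (x : E) (y : G) :
    ‖iteratedFDeriv ℝ i (fun x => H (x, y)) x‖ ≤ ‖iteratedFDeriv ℝ i H (x, y)‖ := by
  rw [iteratedFDeriv_comp_prodMk_left hH hi]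
  refine (ContinuousMultilinearMap.norm_compContinuousLinearMap_le _ _).trans ?_
  exact mul_le_of_le_one_right (norm_nonneg _) <|
    Finset.prod_le_one (fun _ _ => norm_nonneg _) fun _ _ =>
      ContinuousLinearMap.norm_inl_le_one ℝ E G

lemma continuous_iteratedFDeriv_comp_prodMk_left {n : WithTop ℕ∞} {H : E × G → V}
    (hH : ContDiff ℝ n H) {i : ℕ} (hi : i ≤ n) (x : E) :
    Continuous fun y => iteratedFDeriv ℝ i (fun x => H (x, y)) x := by
  simp only [iteratedFDeriv_comp_prodMk_left hH hi]
  exact (ContinuousMultilinearMap.compContinuousLinearMapL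
    fun _ : Fin i => ContinuousLinearMap.inl ℝ E G).continuous.comp
      ((hH.continuous_iteratedFDeriv hi).comp (by fun_prop))

variable [NormedField 𝕜] [NormedSpace 𝕜 V] [SMulCommClass ℝ 𝕜 V] [MeasurableSpace G]
  [OpensMeasurableSpace G] [SecondCountableTopology G] {μ : Measure G}

theorem hasFTaylorSeriesUpTo_integral_smul {H : E × G → V} (hH : H.HasTemperateGrowth)
    {f : G → 𝕜} (hf_meas : AEStronglyMeasurable f μ)
    (hf_int : ∀ q : ℕ, Integrable (fun y => (1 + ‖y‖) ^ q * ‖f y‖) μ) :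
    HasFTaylorSeriesUpTo (⊤ : ℕ∞) (fun x => ∫ y, f y • H (x, y) ∂μ)
      (fun x i => ∫ y, f y • iteratedFDeriv ℝ i (fun x => H (x, y)) x ∂μ) := by
  have h_le (i : ℕ) : (i : WithTop ℕ∞) ≤ (⊤ : ℕ∞) := by exact_mod_cast le_top
  have h_slice (y : G) : ContDiff ℝ (⊤ : ℕ∞) fun x => H (x, y) := hH.1.comp (by fun_prop)
  have h_smul (y : G) (x : E) (i : ℕ) :
      iteratedFDeriv ℝ i (fun x => f y • H (x, y)) x =
        f y • iteratedFDeriv ℝ i (fun x => H (x, y)) x :=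
    iteratedFDeriv_const_smul_apply ((h_slice y).of_le (h_le i)).contDiffAt
  refine hasFTaylorSeriesUpTo_integral_of_dominated
    (P := fun x y i => f y • iteratedFDeriv ℝ i (fun x => H (x, y)) x)
    (.of_forall fun y => ?_) (fun i _ x => ?_) fun i _ x₀ => ?_
  · simpa only [← h_smul] using! ((h_slice y).const_smul (f y)).ftaylorSeries
  · exact hf_meas.smul
      (continuous_iteratedFDeriv_comp_prodMk_left hH.1 (h_le i) x).aestronglyMeasurable
  · obtain ⟨q, A, hA⟩ := hH.2 i
    have hA_nonneg : 0 ≤ A := by simpa using (norm_nonneg _).trans (hA 0)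
    refine ⟨_, Metric.ball_mem_nhds x₀ one_pos, _,
      (hf_int q).const_mul (A * (2 + ‖x₀‖) ^ q), .of_forall fun y x hx => ?_⟩
    have hx_norm : 1 + ‖x‖ ≤ 2 + ‖x₀‖ := by
      have := norm_sub_norm_le x x₀
      rw [mem_ball_iff_norm] at hx
      linarith
    calc ‖f y • iteratedFDeriv ℝ i (fun x => H (x, y)) x‖
        ≤ ‖f y‖ * (A * (1 + ‖(x, y)‖) ^ q) := by
          rw [norm_smul]
          gcongr
          exact (norm_iteratedFDeriv_comp_prodMk_left_le hH.1 (h_le i) x y).trans (hA _)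
      _ ≤ ‖f y‖ * (A * ((2 + ‖x₀‖) * (1 + ‖y‖)) ^ q) := by
          gcongr
          exact (one_add_norm_prodMk_le x y).trans (by gcongr)
      _ = A * (2 + ‖x₀‖) ^ q * ((1 + ‖y‖) ^ q * ‖f y‖) := by rw [mul_pow]; ring

lemma enorm_iteratedFDeriv_integral_smul_le {H : E × G → V} (hH : H.HasTemperateGrowth)
    {f : G → 𝕜} (hf_meas : AEStronglyMeasurable f μ)
    (hf_int : ∀ q : ℕ, Integrable (fun y => (1 + ‖y‖) ^ q * ‖f y‖) μ) (i : ℕ) (x : E) :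
    ‖iteratedFDeriv ℝ i (fun x => ∫ y, f y • H (x, y) ∂μ) x‖ₑ ≤
      ∫⁻ y, ‖f y‖ₑ * ‖iteratedFDeriv ℝ i H (x, y)‖ₑ ∂μ := by
  have h_le : (i : WithTop ℕ∞) ≤ (⊤ : ℕ∞) := by exact_mod_cast le_top
  rw [← (hasFTaylorSeriesUpTo_integral_smul hH hf_meas hf_int).eq_iteratedFDeriv h_le x]
  refine (enorm_integral_le_lintegral_enorm _).trans (lintegral_mono fun y => ?_)
  rw [enorm_smul]
  gcongr
  exact enorm_le_iff_norm_le.2 (norm_iteratedFDeriv_comp_prodMk_left_le hH.1 h_le x y)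

end Kernel

section Seminorms

variable {E : Type*} [NormedAddCommGroup E] [NormedSpace ℝ E]

lemma mu_le_iff {r : ℤ} {l : ℕ} {f : E → ℂ} {C : ENNReal} :
    mu r l f ≤ C ↔
      ∀ x, ∀ i ≤ l, ENNReal.ofReal ((1 + ‖x‖) ^ r) * ‖iteratedFDeriv ℝ i f x‖ₑ ≤ C := by
  simp only [mu, iSup_le_iff]
  refine forall₃_congr fun x i _ => ?_
  rw [ENNReal.ofReal_mul (by positivity), ofReal_norm]

lemma enorm_iteratedFDeriv_le_mu (r : ℤ) {l i : ℕ} (hi : i ≤ l) (f : E → ℂ) (x : E) :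
    ‖iteratedFDeriv ℝ i f x‖ₑ ≤ ENNReal.ofReal ((1 + ‖x‖) ^ (-r)) * mu r l f := by
  have h_inv : ENNReal.ofReal ((1 + ‖x‖) ^ (-r)) * ENNReal.ofReal ((1 + ‖x‖) ^ r) = 1 := by
    rw [← ENNReal.ofReal_mul (by positivity), ← zpow_add₀ (by positivity), neg_add_cancel,
      zpow_zero, ENNReal.ofReal_one]
  grw [← mu_le_iff.1 le_rfl x i hi]
  rw [← mul_assoc, h_inv, one_mul]

lemma norm_iteratedFDeriv_le_toReal_mu {r : ℤ} {l i : ℕ} (hi : i ≤ l) {f : E → ℂ}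
    (hf : mu r l f ≠ ⊤) (x : E) :
    ‖iteratedFDeriv ℝ i f x‖ ≤ (1 + ‖x‖) ^ (-r) * (mu r l f).toReal := by
  have h := ENNReal.toReal_mono (ENNReal.mul_ne_top ENNReal.ofReal_ne_top hf)
    (enorm_iteratedFDeriv_le_mu r hi f x)
  rwa [toReal_enorm, ENNReal.toReal_mul, ENNReal.toReal_ofReal (by positivity)] at h

lemma TemperateGrowth'.hasTemperateGrowth {f : E → ℂ} (hf : TemperateGrowth' f) :
    f.HasTemperateGrowth := by
  refine ⟨hf.1, fun l => ?_⟩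
  obtain ⟨q, hq⟩ := hf.2 l
  refine ⟨q, (mu (-(q : ℤ)) l f).toReal, fun x => ?_⟩
  simpa [mul_comm] using norm_iteratedFDeriv_le_toReal_mu (le_refl l) hq.ne x

lemma SchwartzLike.integrable_one_add_norm_pow_mul_norm [MeasurableSpace E]
    [OpensMeasurableSpace E] [SecondCountableTopology E] (μ : Measure E) [μ.HasTemperateGrowth]
    {f : E → ℂ} (hf : SchwartzLike f) (q : ℕ) :
    Integrable (fun x => (1 + ‖x‖) ^ q * ‖f x‖) μ := by
  have h_cont : Continuous f := hf.1.continuous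
  set k := μ.integrablePower
  set B := (mu ((q + k : ℕ) : ℤ) 0 f).toReal
  refine ((Measure.integrable_pow_neg_integrablePower μ).const_mul B).mono'
    (Continuous.aestronglyMeasurable (by fun_prop)) (.of_forall fun x => ?_)
  have hfx : ‖f x‖ ≤ (1 + ‖x‖) ^ (-((q + k : ℕ) : ℤ)) * B := by
    simpa only [norm_iteratedFDeriv_zero] using
      norm_iteratedFDeriv_le_toReal_mu (le_refl 0) (hf.2 (q + k) 0).ne x
  calc ‖(1 + ‖x‖) ^ q * ‖f x‖‖ = (1 + ‖x‖) ^ q * ‖f x‖ := Real.norm_of_nonneg (by positivity)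
    _ ≤ (1 + ‖x‖) ^ q * ((1 + ‖x‖) ^ (-((q + k : ℕ) : ℤ)) * B) := by gcongr
    _ = B * (1 + ‖x‖) ^ (-(k : ℝ)) := by
        rw [Real.rpow_neg (by positivity), Real.rpow_natCast, zpow_neg, zpow_natCast, pow_add]
        field_simp

end Seminorms

section KernelSeminorms

variable {E G : Type*} [NormedAddCommGroup E] [NormedAddCommGroup G]

lemma one_add_norm_zpow_neg_mul_prodMk_pow_le (x : E) (y : G) (q k : ℕ) :
    (1 + ‖x‖) ^ (-(q : ℤ)) * ((1 + ‖y‖) ^ (-((q + k : ℕ) : ℤ)) * (1 + ‖(x, y)‖) ^ q) ≤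
      (1 + ‖y‖) ^ (-(k : ℝ)) := by
  rw [Real.rpow_neg (by positivity), Real.rpow_natCast]
  simp only [zpow_neg, zpow_natCast]
  calc ((1 + ‖x‖) ^ q)⁻¹ * (((1 + ‖y‖) ^ (q + k))⁻¹ * (1 + ‖(x, y)‖) ^ q)
      ≤ ((1 + ‖x‖) ^ q)⁻¹ * (((1 + ‖y‖) ^ (q + k))⁻¹ * ((1 + ‖x‖) * (1 + ‖y‖)) ^ q) := by
        gcongr
        exact one_add_norm_prodMk_le x y
    _ = ((1 + ‖y‖) ^ k)⁻¹ := by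
        rw [mul_pow, pow_add]
        field_simp

lemma lintegral_one_add_norm_rpow_neg_integrablePower_ne_top [MeasurableSpace G]
    (μ : Measure G) [μ.HasTemperateGrowth] :
    ∫⁻ y, ENNReal.ofReal ((1 + ‖y‖) ^ (-(μ.integrablePower : ℝ))) ∂μ ≠ ⊤ :=
  (Measure.integrable_pow_neg_integrablePower μ).lintegral_lt_top.ne

variable [NormedSpace ℝ E] [NormedSpace ℝ G] [MeasurableSpace G] [OpensMeasurableSpace G]
  [SecondCountableTopology G] {μ : Measure G}

theorem mu_integral_mul_le {H : E × G → ℂ} (hH : H.HasTemperateGrowth) {f : G → ℂ}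
    (hf_meas : AEStronglyMeasurable f μ)
    (hf_int : ∀ q : ℕ, Integrable (fun y => (1 + ‖y‖) ^ q * ‖f y‖) μ) (q k l : ℕ) :
    mu (-(q : ℤ)) l (fun x => ∫ y, H (x, y) * f y ∂μ) ≤
      (∫⁻ y, ENNReal.ofReal ((1 + ‖y‖) ^ (-(k : ℝ))) ∂μ) *
        (mu (-(q : ℤ)) l H * mu ((q + k : ℕ) : ℤ) 0 f) := by
  refine mu_le_iff.2 fun x i hi => ?_
  have h_deriv : ‖iteratedFDeriv ℝ i (fun x => ∫ y, H (x, y) * f y ∂μ) x‖ₑ ≤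
      ∫⁻ y, ‖f y‖ₑ * ‖iteratedFDeriv ℝ i H (x, y)‖ₑ ∂μ := by
    simpa only [smul_eq_mul, mul_comm (f _)] using
      enorm_iteratedFDeriv_integral_smul_le hH hf_meas hf_int i x
  have hf_le (y : G) :
      ‖f y‖ₑ ≤ ENNReal.ofReal ((1 + ‖y‖) ^ (-((q + k : ℕ) : ℤ))) * mu ((q + k : ℕ) : ℤ) 0 f := by
    simpa [enorm_eq_iff_norm_eq.2 (norm_iteratedFDeriv_zero (𝕜 := ℝ) (f := f) (x := y))] using
      enorm_iteratedFDeriv_le_mu ((q + k : ℕ) : ℤ) (le_refl 0) f y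
  have hH_le (y : G) : ‖iteratedFDeriv ℝ i H (x, y)‖ₑ ≤
      ENNReal.ofReal ((1 + ‖(x, y)‖) ^ q) * mu (-(q : ℤ)) l H := by
    simpa only [neg_neg, zpow_natCast] using enorm_iteratedFDeriv_le_mu (-(q : ℤ)) hi H (x, y)
  grw [h_deriv]
  rw [← lintegral_const_mul' _ _ ENNReal.ofReal_ne_top,
    ← lintegral_mul_const _ (by fun_prop)]
  refine lintegral_mono fun y => ?_
  grw [hf_le y, hH_le y, ← one_add_norm_zpow_neg_mul_prodMk_pow_le x y q k]
  rw [ENNReal.ofReal_mul (by positivity), ENNReal.ofReal_mul (by positivity)]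
  exact le_of_eq (by ring)

variable (μ) [μ.HasTemperateGrowth]

theorem TemperateGrowth'.integral_mul {H : E × G → ℂ} (hH : TemperateGrowth' H) {f : G → ℂ}
    (hf : SchwartzLike f) : TemperateGrowth' fun x => ∫ y, H (x, y) * f y ∂μ := by
  have hf_meas : AEStronglyMeasurable f μ := hf.1.continuous.aestronglyMeasurable
  have hf_int := hf.integrable_one_add_norm_pow_mul_norm μ
  constructor
  · simpa only [smul_eq_mul, mul_comm (f _)] using
      (hasFTaylorSeriesUpTo_integral_smul hH.hasTemperateGrowth hf_meas hf_int).contDiff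
  · intro l
    obtain ⟨q, hq⟩ := hH.2 l
    refine ⟨q, (mu_integral_mul_le hH.hasTemperateGrowth hf_meas hf_int q
      μ.integrablePower l).trans_lt ?_⟩
    exact ENNReal.mul_lt_top (lintegral_one_add_norm_rpow_neg_integrablePower_ne_top μ).lt_top
      (ENNReal.mul_lt_top hq (hf.2 _ 0))

end KernelSeminorms

namespace IsOEps

variable {g g₁ g₂ : ℝ → ENNReal} {h h₁ h₂ : ℝ → ℝ}

lemma mono (hg : IsOEps g₁ h₁) (hg_le : ∀ ε ∈ Set.Ioc (0 : ℝ) 1, g₂ ε ≤ g₁ ε)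
    (hh_le : ∀ ε ∈ Set.Ioc (0 : ℝ) 1, h₁ ε ≤ h₂ ε) : IsOEps g₂ h₂ := by
  obtain ⟨C, hC, η, hη, hg⟩ := hg
  refine ⟨C, hC, min η 1, by positivity, fun ε hε_pos hε => ?_⟩
  have hε_mem : ε ∈ Set.Ioc (0 : ℝ) 1 := ⟨hε_pos, hε.trans (min_le_right _ _)⟩
  grw [hg_le ε hε_mem, hg ε hε_pos (hε.trans (min_le_left _ _)), hh_le ε hε_mem]

lemma mul (hg₁ : IsOEps g₁ h₁) (hg₂ : IsOEps g₂ h₂) :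
    IsOEps (fun ε => g₁ ε * g₂ ε) (fun ε => h₁ ε * h₂ ε) := by
  obtain ⟨C₁, hC₁, η₁, hη₁, hg₁⟩ := hg₁
  obtain ⟨C₂, hC₂, η₂, hη₂, hg₂⟩ := hg₂
  refine ⟨C₁ * C₂, by positivity, min η₁ η₂, by positivity, fun ε hε_pos hε => ?_⟩
  beta_reduce
  grw [hg₁ ε hε_pos (hε.trans (min_le_left _ _)), hg₂ ε hε_pos (hε.trans (min_le_right _ _))]
  rcases le_total 0 (C₁ * h₁ ε) with h_nonneg | h_nonpos
  · rw [← ENNReal.ofReal_mul h_nonneg, mul_mul_mul_comm]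
  · simp [ENNReal.ofReal_of_nonpos h_nonpos]

lemma const_mul {c : ENNReal} (hc : c ≠ ⊤) (hg : IsOEps g h) :
    IsOEps (fun ε => c * g ε) h := by
  obtain ⟨C, hC, η, hη, hg⟩ := hg
  refine ⟨(c.toReal + 1) * C, by positivity, η, hη, fun ε hε_pos hε => ?_⟩
  have hc_le : c ≤ ENNReal.ofReal (c.toReal + 1) :=
    (ENNReal.ofReal_toReal hc).symm.trans_le (ENNReal.ofReal_le_ofReal (by linarith))
  beta_reduce
  grw [hg ε hε_pos hε, hc_le]
  rw [← ENNReal.ofReal_mul (by positivity), mul_assoc]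

end IsOEps

section Nets

variable {E G : Type*} [NormedAddCommGroup E] [NormedSpace ℝ E] [NormedAddCommGroup G]
  [NormedSpace ℝ G] [MeasurableSpace G] [OpensMeasurableSpace G] [SecondCountableTopology G]
  (μ : Measure G) [μ.HasTemperateGrowth] {H : ℝ → E × G → ℂ} {f : ℝ → G → ℂ}

theorem IsOEps.mu_integral_mul (hH : ∀ ε ∈ Set.Ioc (0 : ℝ) 1, TemperateGrowth' (H ε))
    (hf : ∀ ε ∈ Set.Ioc (0 : ℝ) 1, SchwartzLike (f ε)) {q l : ℕ} {h₁ h₂ h : ℝ → ℝ}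
    (hHO : IsOEps (fun ε => mu (-(q : ℤ)) l (H ε)) h₁)
    (hfO : IsOEps (fun ε => mu ((q + μ.integrablePower : ℕ) : ℤ) 0 (f ε)) h₂)
    (h_le : ∀ ε ∈ Set.Ioc (0 : ℝ) 1, h₁ ε * h₂ ε ≤ h ε) :
    IsOEps (fun ε => mu (-(q : ℤ)) l fun x => ∫ y, H ε (x, y) * f ε y ∂μ) h :=
  ((hHO.mul hfO).const_mul (lintegral_one_add_norm_rpow_neg_integrablePower_ne_top μ)).mono
    (fun ε hε => mu_integral_mul_le (hH ε hε).hasTemperateGrowth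
      (hf ε hε).1.continuous.aestronglyMeasurable
      ((hf ε hε).integrable_one_add_norm_pow_mul_norm μ) q _ l) h_le

theorem IsNtauNet.integral_mul (hH : IsNtauNet H) (hf : IsESNet f) :
    IsNtauNet fun ε x => ∫ y, H ε (x, y) * f ε y ∂μ := by
  refine ⟨fun ε hε => (hH.1 ε hε).integral_mul μ (hf.1 ε hε), fun l => ?_⟩
  obtain ⟨q, hq⟩ := hH.2 l
  obtain ⟨N, hN⟩ := hf.2 (q + μ.integrablePower) 0
  refine ⟨q, fun p => .mu_integral_mul μ hH.1 hf.1 (hq (p + N)) hN fun ε hε => le_of_eq ?_⟩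
  rw [zpow_neg, zpow_natCast, pow_add, mul_inv_cancel_right₀ (pow_pos hε.1 N).ne']

theorem IsNSNet.isNtauNet_integral_mul (hf : IsNSNet f) (hH : IsEtauNet H) :
    IsNtauNet fun ε x => ∫ y, H ε (x, y) * f ε y ∂μ := by
  refine ⟨fun ε hε => (hH.1 ε hε).integral_mul μ (hf.1 ε hε), fun l => ?_⟩
  obtain ⟨q, N, hN⟩ := hH.2 l
  refine ⟨q, fun p => .mu_integral_mul μ hH.1 hf.1 hN
    (hf.2 (q + μ.integrablePower) 0 (N + p)) fun ε hε => le_of_eq ?_⟩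
  rw [zpow_neg, zpow_natCast, pow_add, inv_mul_cancel_left₀ (pow_pos hε.1 N).ne']

theorem stmt8_general :
    (∀ (H : ℝ → E × G → ℂ) (f : ℝ → G → ℂ), IsNtauNet H → IsESNet f →
      IsNtauNet fun ε x => ∫ y, H ε (x, y) * f ε y ∂μ) ∧
    (∀ (H : ℝ → E × G → ℂ) (f : ℝ → G → ℂ), IsEtauNet H → IsNSNet f →
      IsNtauNet fun ε x => ∫ y, H ε (x, y) * f ε y ∂μ) :=
  ⟨fun _ _ hH hf => hH.integral_mul μ hf, fun _ _ hH hf => hf.isNtauNet_integral_mul μ hH⟩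

end Nets

/-- the generalized integral operator is independent of representatives:
a negligible kernel against a moderate net, or a moderate kernel against a negligible
net, yields a net in `N_τ(ℝ^m)`. -/
theorem stmt8 (m n : ℕ) (hm : 1 ≤ m) (hn : 1 ≤ n) :
    (∀ (H : ℝ → ((Fin m → ℝ) × (Fin n → ℝ)) → ℂ) (f : ℝ → (Fin n → ℝ) → ℂ),
      IsNtauNet H → IsESNet f →
      IsNtauNet (fun ε (x : Fin m → ℝ) => ∫ y : Fin n → ℝ, H ε (x, y) * f ε y)) ∧
    (∀ (H : ℝ → ((Fin m → ℝ) × (Fin n → ℝ)) → ℂ) (f : ℝ → (Fin n → ℝ) → ℂ),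
      IsEtauNet H → IsNSNet f →
      IsNtauNet (fun ε (x : Fin m → ℝ) => ∫ y : Fin n → ℝ, H ε (x, y) * f ε y)) := by
  exact stmt8_general volume
end

section
/- Let m, n ≥ 1 and let L : 𝓢(ℝ^n) → C^∞(ℝ^m) be a linear map, each value L(g) having temperate growth, which is continuous into O_M(ℝ^m). Let ψ ∈ 𝓢(ℝ^n), φ ∈ 𝓢(ℝ^m), and ε ∈ (0,1]; set ψ_ε(v) = ε^{-n} ψ(v/ε), φ_ε(u) = ε^{-m} φ(u/ε), and ψ_{ε,y}(v) = ψ_ε(y−v) for y ∈ ℝ^n. Then for every f ∈ 𝓢(ℝ^n) and every x ∈ ℝ^m: ∫_{ℝ^n} ( ∫_{ℝ^m} L(ψ_{ε,y})(x−u) φ_ε(u) du ) f(y) dy = ∫_{ℝ^m} L(h)(x−u) φ_ε(u) du, where h ∈ 𝓢(ℝ^n) is the function h(v) = ∫_{ℝ^n} ψ_ε(y−v) f(y) dy. -/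
open MeasureTheory Filter

/-!
Fix `x`. The map `T g = ∫ L g (x - u) φ_ε(u) du` is a continuous linear functional on `𝓢`, because
`L` is continuous into functions of polynomial growth and `φ_ε` decays rapidly. The function `h` is
the superposition `∫ f(y) ψ_{ε,y} dy`, which converges absolutely in every Schwartz seminorm since
the seminorms of a translate grow only polynomially. The claim is thus that `T` commutes with
absolutely convergent integrals in `𝓢`. As `T` is bounded by finitely many seminorms, it factors,
by Hahn–Banach, through finitely many weighted derivatives with values in a Banach space, where
Bochner integrals commute with continuous linear maps; differentiation under the integral sign
identifies the weighted derivatives of `h` with the corresponding Bochner integrals.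
-/

section Superposition

open scoped SchwartzMap LineDeriv BoundedContinuousFunction

variable {Y : Type*} [MeasurableSpace Y] {ν : Measure Y}
variable {E E' V V' W : Type*}
  [NormedAddCommGroup E] [NormedSpace ℝ E] [NormedAddCommGroup V] [NormedSpace ℝ V]
  [NormedAddCommGroup E'] [NormedSpace ℝ E'] [NormedAddCommGroup V'] [NormedSpace ℝ V']
  [NormedAddCommGroup W] [NormedSpace ℝ W]

/-- Absolute integrability of a family of Schwartz functions: every Schwartz seminorm of `γ y` is
integrable in `y`. Since `𝓢(E, V)` is not a normed space, `Integrable γ ν` is not available. -/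
structure SchwartzIntegrable (γ : Y → 𝓢(E, V)) (ν : Measure Y) : Prop where
  aestronglyMeasurable : AEStronglyMeasurable γ ν
  integrable_seminorm : ∀ k i, Integrable (fun y => SchwartzMap.seminorm ℝ k i (γ y)) ν

namespace SchwartzIntegrable

variable {γ : Y → 𝓢(E, V)}

lemma integrable_continuous_seminorm (hγ : SchwartzIntegrable γ ν) {p : Seminorm ℝ 𝓢(E, V)}
    (hp : Continuous p) : Integrable (fun y => p (γ y)) ν := by
  obtain ⟨s, C, -, hC⟩ :=
    Seminorm.bound_of_continuous (schwartz_withSeminorms ℝ E V) p hp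
  have hsum : Integrable (fun y => C * ∑ m ∈ s, SchwartzMap.seminorm ℝ m.1 m.2 (γ y)) ν :=
    (integrable_finsetSum s fun m _ => hγ.integrable_seminorm m.1 m.2).const_mul _
  refine hsum.mono' (hp.comp_aestronglyMeasurable hγ.aestronglyMeasurable) (.of_forall fun y => ?_)
  have hsup : s.sup (schwartzSeminormFamily ℝ E V) (γ y)
      ≤ ∑ m ∈ s, SchwartzMap.seminorm ℝ m.1 m.2 (γ y) :=
    (Seminorm.finset_sup_le_sum (schwartzSeminormFamily ℝ E V) s (γ y)).trans_eq
      (sum_apply ..)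
  rw [Real.norm_of_nonneg (apply_nonneg p _)]
  exact (hC (γ y)).trans (mul_le_mul_of_nonneg_left hsup C.2)

lemma integrable_clm (hγ : SchwartzIntegrable γ ν) (A : 𝓢(E, V) →L[ℝ] W) :
    Integrable (fun y => A (γ y)) ν := by
  have hp : Continuous ((normSeminorm ℝ W).comp A.toLinearMap) := continuous_norm.comp A.continuous
  exact (integrable_norm_iff (A.continuous.comp_aestronglyMeasurable hγ.aestronglyMeasurable)).1
    (hγ.integrable_continuous_seminorm hp)

lemma clm_comp (hγ : SchwartzIntegrable γ ν) (A : 𝓢(E, V) →L[ℝ] 𝓢(E', V')) :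
    SchwartzIntegrable (fun y => A (γ y)) ν where
  aestronglyMeasurable := A.continuous.comp_aestronglyMeasurable hγ.aestronglyMeasurable
  integrable_seminorm k i := by
    have hp : Continuous ((SchwartzMap.seminorm ℝ k i).comp A.toLinearMap) :=
      ((schwartz_withSeminorms ℝ E' V').continuous_seminorm (k, i)).comp A.continuous
    exact hγ.integrable_continuous_seminorm hp

lemma integrable_apply (hγ : SchwartzIntegrable γ ν) (v : E) : Integrable (fun y => γ y v) ν :=
  hγ.integrable_clm (BoundedContinuousFunction.evalCLM ℝ v ∘L
    SchwartzMap.toBoundedContinuousFunctionCLM ℝ E V)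

lemma hasFDerivAt_integral (hγ : SchwartzIntegrable γ ν) (v : E) :
    HasFDerivAt (fun w => ∫ y, γ y w ∂ν) (∫ y, fderiv ℝ (γ y) v ∂ν) v := by
  have hderiv := hγ.clm_comp (SchwartzMap.fderivCLM ℝ E V)
  exact hasFDerivAt_integral_of_dominated_of_fderiv_le (F' := fun w y => fderiv ℝ (γ y) w)
    univ_mem (.of_forall fun w => (hγ.integrable_apply w).aestronglyMeasurable)
    (hγ.integrable_apply v) (hderiv.integrable_apply v).aestronglyMeasurable
    (.of_forall fun y w _ => (SchwartzMap.fderivCLM ℝ E V (γ y)).norm_le_seminorm ℝ w)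
    (hderiv.integrable_seminorm 0 0)
    (.of_forall fun y w _ => (γ y).differentiableAt.hasFDerivAt)

lemma lineDerivOp_apply_eq_integral (hγ : SchwartzIntegrable γ ν) {h : 𝓢(E, V)}
    (hh : ∀ v, h v = ∫ y, γ y v ∂ν) (m v : E) : (∂_{m} h) v = ∫ y, (∂_{m} (γ y)) v ∂ν := by
  have hderiv := (hγ.clm_comp (SchwartzMap.fderivCLM ℝ E V)).integrable_apply v
  rw [SchwartzMap.lineDerivOp_apply_eq_fderiv, funext hh, (hγ.hasFDerivAt_integral v).fderiv]
  exact ContinuousLinearMap.integral_apply hderiv m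

lemma iteratedLineDerivOp_apply_eq_integral (hγ : SchwartzIntegrable γ ν) {h : 𝓢(E, V)}
    (hh : ∀ v, h v = ∫ y, γ y v ∂ν) {i : ℕ} (m : Fin i → E) (v : E) :
    (∂^{m} h) v = ∫ y, (∂^{m} (γ y)) v ∂ν := by
  induction i generalizing γ h with
  | zero => exact hh v
  | succ i ih =>
    simp only [LineDeriv.iteratedLineDerivOp_succ_right]
    exact ih (hγ.clm_comp (LineDeriv.lineDerivOpCLM ℝ 𝓢(E, V) (m (Fin.last i))))
      (hγ.lineDerivOp_apply_eq_integral hh _) _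

end SchwartzIntegrable

-- Without this shortcut the pseudometric of `E [×i]→L[ℝ] V` is not recognised as the one induced by
-- its norm, and `E →ᵇ E [×i]→L[ℝ] V` is not seen as a normed space by the integration lemmas.
noncomputable local instance (priority := high) continuousMultilinearMapPseudoMetricSpace
    (i : ℕ) : PseudoMetricSpace (E [×i]→L[ℝ] V) :=
  NormedAddCommGroup.toSeminormedAddCommGroup.toPseudoMetricSpace

/-- The weighted derivative `g ↦ (v ↦ ‖v‖ ^ k • D^i g(v))`, with values in the bounded continuous
functions. Its norm is the Schwartz seminorm `(k, i)`, so that Banach-space-valued integrals can be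
used for Schwartz functions. -/
noncomputable def weightedIteratedFDerivCLM (E V : Type*) [NormedAddCommGroup E] [NormedSpace ℝ E]
    [NormedAddCommGroup V] [NormedSpace ℝ V] (k i : ℕ) :
    𝓢(E, V) →L[ℝ] (E →ᵇ E [×i]→L[ℝ] V) :=
  SchwartzMap.mkCLMtoNormedSpace (𝕜 := ℝ) (σ := .id ℝ) (G := E →ᵇ E [×i]→L[ℝ] V)
    (fun g : 𝓢(E, V) => BoundedContinuousFunction.ofNormedAddCommGroup
      (fun v => ‖v‖ ^ k • iteratedFDeriv ℝ i g v)
      ((continuous_norm.pow k).smul ((g.smooth i).continuous_iteratedFDeriv le_rfl))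
      (SchwartzMap.seminorm ℝ k i g) fun v => by
        simpa [norm_smul] using g.le_seminorm ℝ k i v)
    (fun g g' => by
      ext1 v
      exact (congrArg _ (iteratedFDeriv_add_apply (g.smooth i).contDiffAt
        (g'.smooth i).contDiffAt)).trans (smul_add ..))
    (fun c g => by
      ext1 v
      exact (congrArg _ (iteratedFDeriv_const_smul_apply (g.smooth i).contDiffAt)).trans
        (smul_comm ..))
    ⟨{(k, i)}, 1, zero_le_one, fun g => by
      simpa using BoundedContinuousFunction.norm_ofNormedAddCommGroup_le _ (apply_nonneg _ _) _⟩

lemma weightedIteratedFDerivCLM_apply (k i : ℕ) (g : 𝓢(E, V)) (v : E) :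
    weightedIteratedFDerivCLM E V k i g v = ‖v‖ ^ k • iteratedFDeriv ℝ i g v := rfl

lemma seminorm_le_norm_weightedIteratedFDerivCLM (k i : ℕ) (g : 𝓢(E, V)) :
    SchwartzMap.seminorm ℝ k i g ≤ ‖weightedIteratedFDerivCLM E V k i g‖ := by
  refine g.seminorm_le_bound ℝ k i (norm_nonneg _) fun v => ?_
  simpa [weightedIteratedFDerivCLM_apply, norm_smul] using
    (weightedIteratedFDerivCLM E V k i g).norm_coe_le_norm v

/-- The family of weighted derivatives indexed by a finite set `s` of seminorm indices. A functional
bounded by the seminorms in `s` factors through this map into a normed space. -/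
noncomputable def jetCLM (E V : Type*) [NormedAddCommGroup E] [NormedSpace ℝ E]
    [NormedAddCommGroup V] [NormedSpace ℝ V] (s : Finset (ℕ × ℕ)) :
    𝓢(E, V) →L[ℝ] ((a : s) → E →ᵇ E [×a.1.2]→L[ℝ] V) :=
  ContinuousLinearMap.pi fun a => weightedIteratedFDerivCLM E V a.1.1 a.1.2

lemma finset_sup_seminorm_le_norm_jetCLM (s : Finset (ℕ × ℕ)) (g : 𝓢(E, V)) :
    s.sup (schwartzSeminormFamily ℝ E V) g ≤ ‖jetCLM E V s g‖ :=
  Seminorm.finset_sup_apply_le (norm_nonneg _) fun a ha =>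
    (seminorm_le_norm_weightedIteratedFDerivCLM a.1 a.2 g).trans
      (norm_le_pi_norm (jetCLM E V s g) ⟨a, ha⟩)

lemma exists_strongDual_comp_eq_of_norm_le {𝕜 M B : Type*} [RCLike 𝕜] [AddCommGroup M] [Module 𝕜 M]
    [NormedAddCommGroup B] [NormedSpace 𝕜 B] (J : M →ₗ[𝕜] B) (T : M →ₗ[𝕜] 𝕜) (C : ℝ)
    (hT : ∀ g, ‖T g‖ ≤ C * ‖J g‖) :
    ∃ R : StrongDual 𝕜 B, ∀ g, R (J g) = T g := by
  obtain ⟨S, rfl⟩ : T ∈ J.dualMap.range := by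
    rw [LinearMap.range_dualMap_eq_dualAnnihilator_ker, Submodule.mem_dualAnnihilator]
    intro g hg
    simpa [LinearMap.mem_ker.1 hg] using hT g
  have hS : ∀ b : J.range, ‖S b‖ ≤ C * ‖b‖ := by
    rintro ⟨_, g, rfl⟩
    exact hT g
  obtain ⟨R, hR, -⟩ := exists_extension_norm_eq _ ((S.domRestrict J.range).mkContinuous C hS)
  exact ⟨R, fun g => hR ⟨J g, J.mem_range_self g⟩⟩

namespace SchwartzIntegrable

variable {γ : Y → 𝓢(E, V)}

lemma integrable_iteratedFDeriv (hγ : SchwartzIntegrable γ ν) (i : ℕ) (v : E) :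
    Integrable (fun y => iteratedFDeriv ℝ i (γ y) v) ν := by
  simpa [weightedIteratedFDerivCLM_apply] using hγ.integrable_clm
    (BoundedContinuousFunction.evalCLM ℝ v ∘L weightedIteratedFDerivCLM E V 0 i)

lemma iteratedFDeriv_apply_eq_integral (hγ : SchwartzIntegrable γ ν) {h : 𝓢(E, V)}
    (hh : ∀ v, h v = ∫ y, γ y v ∂ν) (i : ℕ) (v : E) :
    iteratedFDeriv ℝ i h v = ∫ y, iteratedFDeriv ℝ i (γ y) v ∂ν := by
  ext m
  rw [ContinuousMultilinearMap.integral_apply (hγ.integrable_iteratedFDeriv i v)]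
  simpa only [SchwartzMap.iteratedLineDerivOp_eq_iteratedFDeriv] using
    hγ.iteratedLineDerivOp_apply_eq_integral hh m v

variable [CompleteSpace V]

lemma weightedIteratedFDerivCLM_eq_integral (hγ : SchwartzIntegrable γ ν) {h : 𝓢(E, V)}
    (hh : ∀ v, h v = ∫ y, γ y v ∂ν) (k i : ℕ) :
    weightedIteratedFDerivCLM E V k i h = ∫ y, weightedIteratedFDerivCLM E V k i (γ y) ∂ν := by
  ext1 v
  calc weightedIteratedFDerivCLM E V k i h v
      = ∫ y, ‖v‖ ^ k • iteratedFDeriv ℝ i (γ y) v ∂ν := by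
        rw [weightedIteratedFDerivCLM_apply, hγ.iteratedFDeriv_apply_eq_integral hh, integral_smul]
    _ = (∫ y, weightedIteratedFDerivCLM E V k i (γ y) ∂ν) v :=
        (BoundedContinuousFunction.evalCLM ℝ v).integral_comp_comm
          (hγ.integrable_clm (weightedIteratedFDerivCLM E V k i))

lemma jetCLM_eq_integral (hγ : SchwartzIntegrable γ ν) {h : 𝓢(E, V)}
    (hh : ∀ v, h v = ∫ y, γ y v ∂ν) (s : Finset (ℕ × ℕ)) :
    jetCLM E V s h = ∫ y, jetCLM E V s (γ y) ∂ν := by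
  funext a
  have hint (b : s) : Integrable (fun y => jetCLM E V s (γ y) b) ν :=
    hγ.integrable_clm (weightedIteratedFDerivCLM E V b.1.1 b.1.2)
  rw [eval_integral hint]
  exact hγ.weightedIteratedFDerivCLM_eq_integral hh a.1.1 a.1.2

lemma strongDual_integral_comp_comm (hγ : SchwartzIntegrable γ ν) {h : 𝓢(E, V)}
    (hh : ∀ v, h v = ∫ y, γ y v ∂ν) (T : 𝓢(E, V) →L[ℝ] ℝ) : ∫ y, T (γ y) ∂ν = T h := by
  obtain ⟨s, C, -, hC⟩ := Seminorm.bound_of_continuous (schwartz_withSeminorms ℝ E V)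
    ((normSeminorm ℝ ℝ).comp T.toLinearMap) (continuous_norm.comp T.continuous)
  have hT (g : 𝓢(E, V)) : ‖T g‖ ≤ C * ‖jetCLM E V s g‖ :=
    (hC g).trans (mul_le_mul_of_nonneg_left (finset_sup_seminorm_le_norm_jetCLM s g) C.2)
  obtain ⟨R, hR⟩ :=
    exists_strongDual_comp_eq_of_norm_le (jetCLM E V s).toLinearMap T.toLinearMap C hT
  calc ∫ y, T (γ y) ∂ν = ∫ y, R (jetCLM E V s (γ y)) ∂ν := by simp_rw [← T.coe_coe, ← hR]; rfl
    _ = R (jetCLM E V s h) := by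
      rw [R.integral_comp_comm (hγ.integrable_clm _), hγ.jetCLM_eq_integral hh]
    _ = T h := hR h

theorem integral_clm_comp_comm [CompleteSpace W] (hγ : SchwartzIntegrable γ ν) {h : 𝓢(E, V)}
    (hh : ∀ v, h v = ∫ y, γ y v ∂ν) (T : 𝓢(E, V) →L[ℝ] W) : ∫ y, T (γ y) ∂ν = T h := by
  refine (SeparatingDual.eq_iff_forall_dual_eq (R := ℝ)).2 fun R => ?_
  rw [← R.integral_comp_comm (hγ.integrable_clm T)]
  exact hγ.strongDual_integral_comp_comm hh (R ∘L T)

end SchwartzIntegrable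

end Superposition

section Translation

open scoped SchwartzMap Topology

variable {E V : Type*} [NormedAddCommGroup E] [NormedSpace ℝ E] [NormedAddCommGroup V]
  [NormedSpace ℝ V]

lemma one_add_norm_pow_le_mul {E : Type*} [SeminormedAddGroup E] (q : ℕ) (v y : E) :
    (1 + ‖v‖) ^ q ≤ (1 + ‖y‖) ^ q * (1 + ‖v - y‖) ^ q := by
  have hv : ‖v‖ ≤ ‖v - y‖ + ‖y‖ := by simpa using norm_add_le (v - y) y
  rw [← mul_pow]
  gcongr
  nlinarith [norm_nonneg y, norm_nonneg (v - y)]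

lemma iteratedFDeriv_compSubConstCLM (G : 𝓢(E, V)) (i : ℕ) (y v : E) :
    iteratedFDeriv ℝ i (G.compSubConstCLM ℝ y) v = iteratedFDeriv ℝ i G (v - y) :=
  iteratedFDeriv_comp_sub i y v

lemma seminorm_compSubConstCLM_le (k i : ℕ) (G : 𝓢(E, V)) (y : E) :
    SchwartzMap.seminorm ℝ k i (G.compSubConstCLM ℝ y) ≤ (1 + ‖y‖) ^ k *
      (2 ^ k * (Finset.Iic (k, i)).sup (fun m => SchwartzMap.seminorm ℝ m.1 m.2) G) := by
  refine SchwartzMap.seminorm_le_bound ℝ k i _ (by positivity) fun v => ?_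
  rw [iteratedFDeriv_compSubConstCLM]
  calc ‖v‖ ^ k * ‖iteratedFDeriv ℝ i G (v - y)‖
      ≤ (1 + ‖v‖) ^ k * ‖iteratedFDeriv ℝ i G (v - y)‖ := by gcongr; linarith
    _ ≤ (1 + ‖y‖) ^ k * (1 + ‖v - y‖) ^ k * ‖iteratedFDeriv ℝ i G (v - y)‖ := by
        gcongr
        exact one_add_norm_pow_le_mul k v y
    _ ≤ _ := by
        rw [mul_assoc]
        exact mul_le_mul_of_nonneg_left (SchwartzMap.one_add_le_sup_seminorm_apply (m := (k, i))
          le_rfl le_rfl G (v - y)) (by positivity)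

lemma one_add_norm_pow_mul_norm_iteratedFDeriv_le (k i : ℕ) (G : 𝓢(E, V)) {v w : E}
    (hvw : ‖v - w‖ ≤ 1) : (1 + ‖v‖) ^ k * ‖iteratedFDeriv ℝ i G w‖ ≤
      2 ^ k * (2 ^ k * (Finset.Iic (k, i)).sup (fun m => SchwartzMap.seminorm ℝ m.1 m.2) G) := by
  calc (1 + ‖v‖) ^ k * ‖iteratedFDeriv ℝ i G w‖
      ≤ (1 + ‖v - w‖) ^ k * (1 + ‖w‖) ^ k * ‖iteratedFDeriv ℝ i G w‖ := by
        gcongr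
        simpa using one_add_norm_pow_le_mul k v (v - w)
    _ ≤ 2 ^ k * (1 + ‖w‖) ^ k * ‖iteratedFDeriv ℝ i G w‖ := by
        gcongr
        linarith
    _ ≤ _ := by
        rw [mul_assoc]
        exact mul_le_mul_of_nonneg_left (SchwartzMap.one_add_le_sup_seminorm_apply (m := (k, i))
          le_rfl le_rfl G w) (by positivity)

lemma seminorm_compSubConstCLM_sub_le (k i : ℕ) (G : 𝓢(E, V)) {y : E} (hy : ‖y‖ ≤ 1) :
    SchwartzMap.seminorm ℝ k i (G.compSubConstCLM ℝ y - G) ≤ 2 ^ k *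
      (2 ^ k * (Finset.Iic (k, i + 1)).sup (fun m => SchwartzMap.seminorm ℝ m.1 m.2) G) * ‖y‖ := by
  refine SchwartzMap.seminorm_le_bound ℝ k i _ (by positivity) fun v => ?_
  set C := 2 ^ k * (2 ^ k * (Finset.Iic (k, i + 1)).sup (fun m => SchwartzMap.seminorm ℝ m.1 m.2) G)
  have hdiff : Differentiable ℝ (iteratedFDeriv ℝ i G) :=
    (G.smooth ⊤).differentiable_iteratedFDeriv (by exact_mod_cast ENat.natCast_lt_top i)
  have hderiv : ∀ w ∈ Metric.closedBall v 1,
      ‖fderiv ℝ (iteratedFDeriv ℝ i G) w‖ ≤ C / (1 + ‖v‖) ^ k := fun w hw => by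
    rw [le_div_iff₀' (by positivity), norm_fderiv_iteratedFDeriv]
    exact one_add_norm_pow_mul_norm_iteratedFDeriv_le k (i + 1) G (mem_closedBall_iff_norm'.1 hw)
  have hmean : ‖iteratedFDeriv ℝ i G (v - y) - iteratedFDeriv ℝ i G v‖
      ≤ C / (1 + ‖v‖) ^ k * ‖y‖ := by
    simpa using (convex_closedBall v 1).norm_image_sub_le_of_norm_fderiv_le (fun w _ => hdiff w)
      hderiv (Metric.mem_closedBall_self zero_le_one)
      (show v - y ∈ _ by simpa [mem_closedBall_iff_norm] using hy)
  calc ‖v‖ ^ k * ‖iteratedFDeriv ℝ i (G.compSubConstCLM ℝ y - G) v‖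
      = ‖v‖ ^ k * ‖iteratedFDeriv ℝ i (G.compSubConstCLM ℝ y) v - iteratedFDeriv ℝ i G v‖ := by
        congr 2
        exact iteratedFDeriv_sub_apply ((G.compSubConstCLM ℝ y).smooth i).contDiffAt
          (G.smooth i).contDiffAt
    _ ≤ (1 + ‖v‖) ^ k * (C / (1 + ‖v‖) ^ k * ‖y‖) := by
        rw [iteratedFDeriv_compSubConstCLM]
        gcongr
        linarith
    _ = C * ‖y‖ := by field_simp

lemma tendsto_compSubConstCLM_zero (G : 𝓢(E, V)) :
    Tendsto (fun y => G.compSubConstCLM ℝ y) (𝓝 0) (𝓝 G) := by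
  refine ((schwartz_withSeminorms ℝ E V).tendsto_nhds _ _).2 fun ⟨k, i⟩ ε hε => ?_
  set C :=
    2 ^ k * (2 ^ k * (Finset.Iic (k, i + 1)).sup (fun m => SchwartzMap.seminorm ℝ m.1 m.2) G)
  have hC : Tendsto (fun y : E => C * ‖y‖) (𝓝 0) (𝓝 0) := by
    simpa using tendsto_norm_zero.const_mul C
  filter_upwards [hC.eventually_lt_const hε, Metric.closedBall_mem_nhds (0 : E) one_pos]
    with y hyε hy1
  exact (seminorm_compSubConstCLM_sub_le k i G (mem_closedBall_zero_iff.1 hy1)).trans_lt hyε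

lemma continuous_compSubConstCLM (G : 𝓢(E, V)) : Continuous fun y => G.compSubConstCLM ℝ y := by
  refine continuous_iff_continuousAt.2 fun z => ?_
  have hsub : Tendsto (fun y => y - z) (𝓝 z) (𝓝 0) := by
    simpa using (continuous_sub_right z).tendsto z
  simpa [ContinuousAt, Function.comp_def] using
    (tendsto_compSubConstCLM_zero (G.compSubConstCLM ℝ z)).comp hsub

end Translation

section TranslateSuperposition

open scoped SchwartzMap

variable {E V : Type*} [NormedAddCommGroup E] [NormedSpace ℝ E] [NormedAddCommGroup V]
  [NormedSpace ℝ V] [MeasurableSpace E] [BorelSpace E] [SecondCountableTopology E]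
  (μ : Measure E) [μ.HasTemperateGrowth]

lemma integrable_one_add_norm_pow_mul (f : 𝓢(E, V)) (q : ℕ) :
    Integrable (fun y => (1 + ‖y‖) ^ q * ‖f y‖) μ := by
  have hsum : Integrable
      (fun y => ∑ k ∈ Finset.range (q + 1), (q.choose k : ℝ) * (‖y‖ ^ k * ‖f y‖)) μ :=
    integrable_finsetSum _ fun k _ => (f.integrable_pow_mul μ k).const_mul _
  refine hsum.congr (.of_forall fun y => ?_)
  simp only [add_comm (1 : ℝ), add_pow, Finset.sum_mul, one_pow, mul_one]
  exact Finset.sum_congr rfl fun k _ => by ring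

variable {𝕜 : Type*} [RCLike 𝕜] [NormedSpace 𝕜 V] [SMulCommClass ℝ 𝕜 V]

lemma schwartzIntegrable_smul_compSubConstCLM (f : 𝓢(E, 𝕜)) (G : 𝓢(E, V)) :
    SchwartzIntegrable (fun y => f y • G.compSubConstCLM ℝ y) μ := by
  have hcont : Continuous fun y => f y • G.compSubConstCLM ℝ y :=
    f.continuous.smul (continuous_compSubConstCLM G)
  -- makes `𝓢(E, V)` pseudometrizable, so that continuous maps into it are strongly measurable
  have := IsUniformAddGroup.uniformity_countably_generated (α := 𝓢(E, V))
  refine ⟨hcont.aestronglyMeasurable, fun k i => ?_⟩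
  have hseminorm : Continuous (SchwartzMap.seminorm ℝ k i : 𝓢(E, V) → ℝ) :=
    (schwartz_withSeminorms ℝ E V).continuous_seminorm (k, i)
  obtain ⟨M, hM⟩ : ∃ M, ∀ y, SchwartzMap.seminorm ℝ k i (G.compSubConstCLM ℝ y)
      ≤ (1 + ‖y‖) ^ k * M := ⟨_, seminorm_compSubConstCLM_le k i G⟩
  refine ((integrable_one_add_norm_pow_mul μ f k).mul_const M).mono'
    (hseminorm.comp hcont).aestronglyMeasurable (.of_forall fun y => ?_)
  calc ‖SchwartzMap.seminorm ℝ k i (f y • G.compSubConstCLM ℝ y)‖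
      = SchwartzMap.seminorm ℝ k i (f y • G.compSubConstCLM ℝ y) :=
        Real.norm_of_nonneg (apply_nonneg _ _)
    _ = ‖f y‖ * SchwartzMap.seminorm ℝ k i (G.compSubConstCLM ℝ y) :=
        map_smul_eq_mul (SchwartzMap.seminorm 𝕜 k i) (f y) _
    _ ≤ ‖f y‖ * ((1 + ‖y‖) ^ k * M) := by
        gcongr
        exact hM y
    _ = (1 + ‖y‖) ^ k * ‖f y‖ * M := by ring

end TranslateSuperposition

section Pairing

open scoped SchwartzMap

lemma norm_comp_sub_mul_le {F R : Type*} [SeminormedAddCommGroup F] [SeminormedRing R]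
    {g : F → R} {K : ℝ} {p : ℕ} (hK : 0 ≤ K)
    (hg : ∀ v, ‖g v‖ ≤ K * (1 + ‖v‖) ^ p) (φ : F → R) (x u : F) :
    ‖g (x - u) * φ u‖ ≤ K * (1 + ‖x‖) ^ p * ((1 + ‖u‖) ^ p * ‖φ u‖) :=
  calc ‖g (x - u) * φ u‖ ≤ ‖g (x - u)‖ * ‖φ u‖ := norm_mul_le _ _
    _ ≤ K * ((1 + ‖x‖) ^ p * (1 + ‖u‖) ^ p) * ‖φ u‖ := by
        gcongr
        refine (hg _).trans ?_
        gcongr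
        simpa [norm_sub_rev] using one_add_norm_pow_le_mul p (x - u) x
    _ = _ := by ring

variable {E F : Type*} [NormedAddCommGroup E] [NormedSpace ℝ E] [NormedAddCommGroup F]
  [NormedSpace ℝ F]

lemma mu_natCast_le (q l : ℕ) (g : 𝓢(E, ℂ)) : mu (q : ℤ) l g ≤
    ENNReal.ofReal (2 ^ q * (Finset.Iic (q, l)).sup (schwartzSeminormFamily ℂ E ℂ) g) :=
  iSup_le fun v => iSup₂_le fun i hi => ENNReal.ofReal_le_ofReal <| by
    rw [zpow_natCast]
    exact SchwartzMap.one_add_le_sup_seminorm_apply (m := (q, l)) le_rfl hi g v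

lemma norm_apply_le_of_mu_neg_le {g : E → ℂ} {p : ℕ} {K : ℝ} (hK : 0 ≤ K)
    (hg : mu (-(p : ℤ)) 0 g ≤ ENNReal.ofReal K) (v : E) : ‖g v‖ ≤ K * (1 + ‖v‖) ^ p := by
  have hv : ENNReal.ofReal ((1 + ‖v‖) ^ (-(p : ℤ)) * ‖iteratedFDeriv ℝ 0 g v‖)
      ≤ ENNReal.ofReal K :=
    (le_iSup_of_le v (le_iSup₂_of_le (f := fun (i : ℕ) (_ : i ≤ 0) =>
      ENNReal.ofReal ((1 + ‖v‖) ^ (-(p : ℤ)) * ‖iteratedFDeriv ℝ i g v‖)) 0 le_rfl le_rfl)).trans hg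
  rw [ENNReal.ofReal_le_ofReal_iff hK, norm_iteratedFDeriv_zero, zpow_neg, zpow_natCast,
    inv_mul_le_iff₀ (by positivity)] at hv
  rwa [mul_comm]

variable [MeasurableSpace F] [BorelSpace F] [SecondCountableTopology F]
  (ν : Measure F) [ν.HasTemperateGrowth]

lemma integrable_comp_sub_mul {g : F → ℂ} (hgc : Continuous g) {K : ℝ} {p : ℕ} (hK : 0 ≤ K)
    (hg : ∀ v, ‖g v‖ ≤ K * (1 + ‖v‖) ^ p) (φ : 𝓢(F, ℂ)) (x : F) :
    Integrable (fun u => g (x - u) * φ u) ν :=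
  ((integrable_one_add_norm_pow_mul ν φ p).const_mul _).mono' (by fun_prop)
    (.of_forall (norm_comp_sub_mul_le hK hg φ x))

lemma norm_integral_comp_sub_mul_le {g : F → ℂ} {K : ℝ} {p : ℕ} (hK : 0 ≤ K)
    (hg : ∀ v, ‖g v‖ ≤ K * (1 + ‖v‖) ^ p) (φ : 𝓢(F, ℂ)) (x : F) :
    ‖∫ u, g (x - u) * φ u ∂ν‖ ≤ K * (1 + ‖x‖) ^ p * ∫ u, (1 + ‖u‖) ^ p * ‖φ u‖ ∂ν :=
  (norm_integral_le_of_norm_le ((integrable_one_add_norm_pow_mul ν φ p).const_mul _)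
    (.of_forall (norm_comp_sub_mul_le hK hg φ x))).trans_eq
    (integral_const_mul _ _)

lemma exists_clm_eq_integral_comp_sub_mul (L : 𝓢(E, ℂ) →ₗ[ℂ] (F → ℂ))
    (hLc : ∀ g, Continuous (L g)) {C : NNReal} {p q l : ℕ}
    (hL : ∀ g, mu (-(p : ℤ)) 0 (L g) ≤ C * mu (q : ℤ) l g) (φ : 𝓢(F, ℂ)) (x : F) :
    ∃ T : 𝓢(E, ℂ) →L[ℂ] ℂ, ∀ g, T g = ∫ u, L g (x - u) * φ u ∂ν := by
  set N := fun g : 𝓢(E, ℂ) =>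
    C * (2 ^ q * (Finset.Iic (q, l)).sup (schwartzSeminormFamily ℂ E ℂ) g)
  have hN (g : 𝓢(E, ℂ)) : 0 ≤ N g := by positivity
  have hgrowth (g : 𝓢(E, ℂ)) : ∀ v, ‖L g v‖ ≤ N g * (1 + ‖v‖) ^ p := by
    refine norm_apply_le_of_mu_neg_le (hN g) ((hL g).trans ?_)
    rw [show ENNReal.ofReal (N g) = _ from ENNReal.ofReal_mul C.coe_nonneg,
      ENNReal.ofReal_coe_nnreal]
    gcongr
    exact mu_natCast_le q l g
  have hint (g : 𝓢(E, ℂ)) : Integrable (fun u => L g (x - u) * φ u) ν :=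
    integrable_comp_sub_mul ν (hLc g) (hN g) (hgrowth g) φ x
  have hadd (g g' : 𝓢(E, ℂ)) : ∫ u, L (g + g') (x - u) * φ u ∂ν
      = ∫ u, L g (x - u) * φ u ∂ν + ∫ u, L g' (x - u) * φ u ∂ν := by
    simp only [map_add, Pi.add_apply, add_mul]
    exact integral_add (hint g) (hint g')
  have hsmul (c : ℂ) (g : 𝓢(E, ℂ)) :
      ∫ u, L (c • g) (x - u) * φ u ∂ν = c • ∫ u, L g (x - u) * φ u ∂ν := by
    simp only [map_smul, Pi.smul_apply, smul_mul_assoc]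
    exact integral_smul _ _
  refine ⟨SchwartzMap.mkCLMtoNormedSpace (𝕜 := ℂ) (σ := .id ℂ) (G := ℂ)
    (fun g => ∫ u, L g (x - u) * φ u ∂ν) hadd hsmul ⟨Finset.Iic (q, l),
      C * 2 ^ q * ((1 + ‖x‖) ^ p * ∫ u, (1 + ‖u‖) ^ p * ‖φ u‖ ∂ν), by positivity, fun g => ?_⟩,
    fun _ => rfl⟩
  exact (norm_integral_comp_sub_mul_le ν (hN g) (hgrowth g) φ x).trans_eq (by simp only [N]; ring)

end Pairing

section Exchange

open scoped SchwartzMap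

theorem stmt14_general {E F : Type*} [NormedAddCommGroup E] [NormedSpace ℝ E]
    [MeasurableSpace E] [BorelSpace E] [SecondCountableTopology E]
    [NormedAddCommGroup F] [NormedSpace ℝ F]
    [MeasurableSpace F] [BorelSpace F] [SecondCountableTopology F]
    (μ : Measure E) [μ.HasTemperateGrowth] (ν : Measure F) [ν.HasTemperateGrowth]
    (L : 𝓢(E, ℂ) →ₗ[ℂ] (F → ℂ)) (hLc : ∀ g, Continuous (L g)) {C : NNReal} {p q l : ℕ}
    (hL : ∀ g, mu (-(p : ℤ)) 0 (L g) ≤ C * mu (q : ℤ) l g)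
    (ψ : 𝓢(E, ℂ)) (φ : 𝓢(F, ℂ)) (Ψ : E → 𝓢(E, ℂ)) (hΨ : ∀ y v, Ψ y v = ψ (y - v))
    (f h : 𝓢(E, ℂ)) (hh : ∀ v, h v = ∫ y, ψ (y - v) * f y ∂μ) (x : F) :
    ∫ y, (∫ u, L (Ψ y) (x - u) * φ u ∂ν) * f y ∂μ = ∫ u, L h (x - u) * φ u ∂ν := by
  obtain ⟨T, hT⟩ := exists_clm_eq_integral_comp_sub_mul ν L hLc hL φ x
  have hΨ_translate (y : E) : Ψ y = (Ψ 0).compSubConstCLM ℝ y := by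
    ext v
    rw [SchwartzMap.compSubConstCLM_apply, hΨ, hΨ, zero_sub, neg_sub]
  have hsuperposition : SchwartzIntegrable (fun y => f y • Ψ y) μ := by
    simpa only [← hΨ_translate] using schwartzIntegrable_smul_compSubConstCLM μ f (Ψ 0)
  have hh' (v : E) : h v = ∫ y, (f y • Ψ y) v ∂μ := by
    simp only [hh, smul_apply, smul_eq_mul, hΨ, mul_comm]
  calc ∫ y, (∫ u, L (Ψ y) (x - u) * φ u ∂ν) * f y ∂μ = ∫ y, T (f y • Ψ y) ∂μ := by
        simp_rw [← hT, map_smul, smul_eq_mul, mul_comm]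
    _ = T h := hsuperposition.integral_clm_comp_comm hh' (T.restrictScalars ℝ)
    _ = ∫ u, L h (x - u) * φ u ∂ν := hT h

end Exchange

/-- The rescaling `scaled ρ t` of a Schwartz function, as a Schwartz function. -/
noncomputable def scaledSchwartz {d : ℕ} (ρ : SchwartzMap (Fin d → ℝ) ℂ) {t : ℝ} (ht : t ≠ 0) :
    SchwartzMap (Fin d → ℝ) ℂ :=
  ((t ^ (-(d : ℤ)) : ℝ) : ℂ) • SchwartzMap.compCLMOfContinuousLinearEquiv ℂ
    (ContinuousLinearEquiv.smulLeft (Units.mk0 t⁻¹ (inv_ne_zero ht))) ρ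

/-- exchange of the integral and the operator: the kernel applied to `f`
equals the regularized operator applied to `ψ_ε ∗ f`. -/
theorem stmt14 (m n : ℕ) (hm : 1 ≤ m) (hn : 1 ≤ n)
    (L : SchwartzMap (Fin n → ℝ) ℂ →ₗ[ℂ] ((Fin m → ℝ) → ℂ))
    (hsm : ∀ f, TemperateGrowth' (L f)) (hcont : ContinuousIntoOM m n ⇑L)
    (ψ : SchwartzMap (Fin n → ℝ) ℂ) (φ : SchwartzMap (Fin m → ℝ) ℂ)
    (ε : ℝ) (hε : ε ∈ Set.Ioc (0:ℝ) 1)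
    (Ψ : (Fin n → ℝ) → SchwartzMap (Fin n → ℝ) ℂ)
    (hΨ : ∀ y v, Ψ y v = scaled ⇑ψ ε (y - v))
    (f : SchwartzMap (Fin n → ℝ) ℂ)
    (h : SchwartzMap (Fin n → ℝ) ℂ)
    (hh : ∀ v, h v = ∫ y : Fin n → ℝ, scaled ⇑ψ ε (y - v) * f y)
    (x : Fin m → ℝ) :
    (∫ y : Fin n → ℝ, (∫ u : Fin m → ℝ, L (Ψ y) (x - u) * scaled ⇑φ ε u) * f y)
      = ∫ u : Fin m → ℝ, L h (x - u) * scaled ⇑φ ε u := by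
  obtain ⟨C, -, p, q, l, hL⟩ := hcont 0
  exact stmt14_general volume volume L (fun g => (hsm g).1.continuous) (C := C.toNNReal) hL
    (scaledSchwartz ψ hε.1.ne') (scaledSchwartz φ hε.1.ne') Ψ hΨ f h hh x
end
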